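/- Let p be a prime, n a positive integer. Let g = X^n − 1 ∈ F_p[X] and let f ∈ F_p[X] be a primitive polynomial of degree n. Then the subgroup of GL_n(F_p) generated by the companion matrices C_f and C_g equals GL_n(F_p). -/

import Mathlib

open Polynomial Matrix
open scoped MatrixGroups

/-- The companion matrix of a polynomial `f` of degree `n`: entries `1` on the
subdiagonal, last column `(-a_0, …, -a_{n-1})ᵀ`, and `0` elsewhere. -/
def companionMatrix {F : Type} [Field F] (n : ℕ) (f : Polynomial F) :
    Matrix (Fin n) (Fin n) F :=
  Matrix.of fun i j =>
    if (j : ℕ) = n - 1 then -f.coeff (i : ℕ)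
    else if (i : ℕ) = (j : ℕ) + 1 then 1 else 0

/-- `f` is a primitive polynomial of degree `n` over the finite field `F`:
`f` is monic irreducible of degree `n` and the image of `X` in `F[X]/(f)` is a
unit generating the whole unit group. -/
def IsPrimitivePoly {F : Type} [Field F] (f : Polynomial F) (n : ℕ) : Prop :=
  f.Monic ∧ f.natDegree = n ∧ Irreducible f ∧
    ∃ u : (AdjoinRoot f)ˣ, (u : AdjoinRoot f) = AdjoinRoot.root f ∧
      ∀ v : (AdjoinRoot f)ˣ, v ∈ Subgroup.zpowers u

/-!
Identify the column space with `L = F_p[X] / (f) = F_{p^n}`. Then `C_f` is multiplication by the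
root of `f`, hence generates all multiplications by elements of `Lˣ`, and `C_f C_g⁻¹` is a
dilatransvection `x ↦ x + φ x • u`, because the two companion matrices differ only in the last
column. If the group contained no nontrivial transvection, comparing conjugates of the
dilatransvection with the same centre would make every element of `L` quadratic over `F_p` and
`φ u = -2`; for primitive `f` and `g = X ^ n - 1` a determinant comparison excludes this.

Let `W` be the common kernel of the forms `ψ` for which `x ↦ x + ψ x • 1` is a transvection in the
group. The axis relation between centres is symmetric, which makes `W` closed under inversion; by
Hua's identity `W` is a subfield, and applying a transvection of the group forces `W = F_p`. By
duality every form vanishing at `1` occurs, and conjugating by multiplications gives all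
transvections. Determinants are supplied by the surjectivity of the norm.
-/

open Module

section Generation

variable {K V : Type*} [Field K] [AddCommGroup V] [Module K V]

theorem not_isExceptional_transvection_mul {e : V ≃ₗ[K] V} {a : K}
    (ha : ∀ x, e x - a • x ∈ e.fixedSubmodule) (ha1 : a ≠ 1) {φ : Dual K V}
    (hφ : φ ≠ 0) (hφ_fixed : e.fixedSubmodule ≤ LinearMap.ker φ) {u : V} (hφu : φ u = 0)
    (hu : e u ≠ u) : ¬ (LinearEquiv.transvection hφu * e).IsExceptional := by
  rintro ⟨-, -, b, hb⟩
  rw [LinearEquiv.fixedReduce_eq_smul_iff] at hb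
  obtain ⟨x, hx⟩ : ∃ x, φ x ≠ 0 := by
    by_contra! h
    exact hφ (LinearMap.ext h)
  have hφe (y : V) : φ (e y) = a * φ y := by
    simpa [sub_eq_zero] using hφ_fixed (ha y)
  have ha0 : a ≠ 0 := by
    rintro rfl
    exact hx (by simpa using hφe (e.symm x))
  have hte (y : V) : (LinearEquiv.transvection hφu * e) y = e y + (a * φ y) • u := by
    rw [LinearEquiv.mul_apply, LinearEquiv.transvection.apply, hφe]
  set y : V := e x + (a * φ x) • u - b • x with hy
  have hfix : e y + (a * φ y) • u = y := by
    simpa only [LinearMap.mem_fixedSubmodule_iff, LinearEquiv.coe_coe, hte] using hb x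
  have hφy : φ y = (a - b) * φ x := by
    simp [hy, hφe, hφu, sub_mul]
  have hab : a = b := by
    have h : (a - 1) * φ y = 0 := by
      simpa [hφe, hφu, sub_mul, sub_eq_zero] using congrArg φ hfix
    simpa [hφy, sub_eq_zero, ha1, hx] using h
  have hex : e (e x - a • x) = e x - a • x := by simpa using ha x
  have hy' : y = (e x - a • x) + (a * φ x) • u := by
    rw [hy, hab]
    abel
  have heu : (a * φ x) • e u = (a * φ x) • u := by
    rwa [hφy, hab, sub_self, zero_mul, mul_zero, zero_smul, add_zero, hy', map_add, hex, map_smul,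
      add_right_inj] at hfix
  exact hu (smul_right_injective V (mul_ne_zero ha0 hx) heu)

variable [Module.Finite K V]

theorem exists_transvection_mul_not_isExceptional {e : V ≃ₗ[K] V} (he : e.IsExceptional) :
    ∃ t ∈ LinearEquiv.transvections K V, ¬ (t * e).IsExceptional := by
  obtain ⟨hrank, hne, a, ha⟩ := he
  rw [LinearEquiv.fixedReduce_eq_smul_iff] at ha
  obtain ⟨u, hu⟩ : ∃ u, e u - u ∉ e.fixedSubmodule := by
    by_contra! h
    exact hne ((LinearEquiv.fixedReduce_eq_one e).mpr h)
  have ha1 : a ≠ 1 := by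
    rintro rfl
    exact hu (by simpa using ha u)
  obtain ⟨φ, hφ, hker⟩ := Submodule.exists_le_ker_of_lt_top _
    (LinearEquiv.sup_span_singleton_lt_top u hrank)
  have hφu : φ u = 0 := hker (Submodule.mem_sup_right (Submodule.mem_span_singleton_self u))
  refine ⟨_, LinearEquiv.mem_transvections hφu,
    not_isExceptional_transvection_mul ha ha1 hφ (le_sup_left.trans hker) hφu ?_⟩
  intro heu
  simp [heu] at hu

theorem mem_of_det_eq_one_of_not_isExceptional {H : Subgroup (V ≃ₗ[K] V)}
    (hH : LinearEquiv.transvections K V ⊆ H) {e : V ≃ₗ[K] V} (hdet : LinearEquiv.det e = 1)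
    (he : ¬ e.IsExceptional) : e ∈ H := by
  obtain ⟨s, hs, d, ⟨φ, u, hd⟩, rfl⟩ := Set.mem_mul.mp
    (LinearEquiv.mem_transvections_pow_mul_dilatransvections_of_not_isExceptional he)
  have hker : LinearEquiv.transvections K V ⊆ (LinearEquiv.det (R := K) (M := V)).ker := by
    rintro _ ⟨φ, u, hφu, rfl⟩
    exact LinearEquiv.transvection.det_eq_one hφu
  have hs_det : LinearEquiv.det s = 1 := Subgroup.pow_subset hker hs
  have hφu : φ u = 0 := by
    have h := congrArg Units.val hdet
    rw [map_mul, hs_det, one_mul, LinearEquiv.coe_det, hd, LinearMap.transvection.det] at h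
    simpa using h
  refine H.mul_mem (Subgroup.pow_subset hH hs)
    (hH ⟨φ, u, hφu, LinearEquiv.toLinearMap_injective ?_⟩)
  rw [hd, LinearEquiv.transvection.coe_toLinearMap]

theorem eq_top_of_transvections_subset {H : Subgroup (V ≃ₗ[K] V)}
    (hH : LinearEquiv.transvections K V ⊆ H)
    (hdet : ∀ d : Kˣ, ∃ h ∈ H, LinearEquiv.det h = d) : H = ⊤ := by
  have hSL (e : V ≃ₗ[K] V) (he : LinearEquiv.det e = 1) : e ∈ H := by
    by_cases hexc : e.IsExceptional
    · obtain ⟨t, ⟨φ, u, hφu, rfl⟩, ht⟩ := exists_transvection_mul_not_isExceptional hexc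
      refine (H.mul_mem_cancel_left (hH (LinearEquiv.mem_transvections hφu))).mp
        (mem_of_det_eq_one_of_not_isExceptional hH ?_ ht)
      rw [map_mul, he, LinearEquiv.transvection.det_eq_one, one_mul]
    · exact mem_of_det_eq_one_of_not_isExceptional hH he hexc
  refine eq_top_iff.mpr fun e _ => ?_
  obtain ⟨h, hh, hdet_h⟩ := hdet (LinearEquiv.det e)
  refine (H.mul_mem_cancel_left (H.inv_mem hh)).mp (hSL _ ?_)
  rw [map_mul, map_inv, hdet_h, inv_mul_cancel]
end Generation

section Dilatransvections

variable {K V : Type*} [CommRing K] [AddCommGroup V] [Module K V]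
  {H : Subgroup (V ≃ₗ[K] V)} {φ ψ : Dual K V} {u v w : V}

/-- The subgroup `H` contains the dilatransvection `x ↦ x + φ x • u`. The value of `φ u` is
arbitrary; this is a transvection when `φ u = 0`. -/
def ContainsDilatransvection (H : Subgroup (V ≃ₗ[K] V)) (φ : Dual K V) (u : V) : Prop :=
  ∃ g ∈ H, (g : V →ₗ[K] V) = LinearMap.transvection φ u

theorem ContainsDilatransvection.conj (h : ContainsDilatransvection H φ u) {g : V ≃ₗ[K] V}
    (hg : g ∈ H) : ContainsDilatransvection H (φ ∘ₗ g.symm) (g u) := by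
  obtain ⟨t, ht, hφ⟩ := h
  refine ⟨g * t * g⁻¹, H.mul_mem (H.mul_mem hg ht) (H.inv_mem hg), ?_⟩
  rw [← LinearMap.transvection.congr, ← hφ]
  rfl

theorem ContainsDilatransvection.sub (hφ : ContainsDilatransvection H φ u)
    (hψ : ContainsDilatransvection H ψ u) (huv : φ u = ψ u) :
    ContainsDilatransvection H (φ - ψ) u := by
  obtain ⟨s, hs, hsφ⟩ := hφ
  obtain ⟨t, ht, htψ⟩ := hψ
  refine ⟨s * t⁻¹, H.mul_mem hs (H.inv_mem ht), ?_⟩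
  ext y
  obtain ⟨x, rfl⟩ := t.surjective y
  have hs_apply (z : V) : s z = z + φ z • u := LinearMap.congr_fun hsφ z
  have ht_apply (z : V) : t z = z + ψ z • u := LinearMap.congr_fun htψ z
  calc (s * t⁻¹) (t x) = x + φ x • u := by rw [← hs_apply]; exact congrArg s (t.symm_apply_apply x)
    _ = LinearMap.transvection (φ - ψ) u (t x) := by
      simp only [LinearMap.transvection.apply, ht_apply, map_add, LinearMap.sub_apply, map_smul,
        huv]
      module

/-- The linear forms `φ` for which `x ↦ x + φ x • v` is a transvection in `H`. -/
def transvectionForms (H : Subgroup (V ≃ₗ[K] V)) (v : V) : AddSubgroup (Dual K V) :=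
  .ofSub {φ | φ v = 0 ∧ ContainsDilatransvection H φ v}
    ⟨0, rfl, 1, H.one_mem, (LinearMap.transvection.of_left_eq_zero v).symm⟩
    (by
      rintro φ ⟨hφv, hφ⟩ ψ ⟨hψv, hψ⟩
      have h : φ v = ψ v := hφv.trans hψv.symm
      exact ⟨by simp [h], by simpa [sub_eq_add_neg] using hφ.sub hψ h⟩)

theorem comp_symm_mem_transvectionForms (hφ : φ ∈ transvectionForms H v) {g : V ≃ₗ[K] V}
    (hg : g ∈ H) : φ ∘ₗ g.symm ∈ transvectionForms H (g v) :=
  ⟨by simpa using hφ.1, hφ.2.conj hg⟩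

/-- The intersection of the hyperplanes fixed by the transvections `x ↦ x + φ x • v` in `H`. -/
def transvectionAxis (H : Subgroup (V ≃ₗ[K] V)) (v : V) : Submodule K V :=
  ⨅ φ ∈ transvectionForms H v, LinearMap.ker φ

theorem mem_transvectionAxis :
    w ∈ transvectionAxis H v ↔ ∀ φ ∈ transvectionForms H v, φ w = 0 := by
  simp [transvectionAxis]

theorem self_mem_transvectionAxis (v : V) : v ∈ transvectionAxis H v :=
  mem_transvectionAxis.mpr fun _ hφ => hφ.1

theorem apply_mem_transvectionAxis (hw : w ∈ transvectionAxis H v) {g : V ≃ₗ[K] V} (hg : g ∈ H) :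
    g w ∈ transvectionAxis H (g v) := by
  rw [mem_transvectionAxis] at hw ⊢
  intro φ hφ
  have h := comp_symm_mem_transvectionForms hφ (H.inv_mem hg)
  exact hw _ (by simpa using h)

end Dilatransvections

section Multiplications

variable {K L : Type*} [CommRing K] [Field L] [Algebra K L]
  {H : Subgroup (L ≃ₗ[K] L)} {φ : Dual K L} {c u v w : L}

theorem ContainsDilatransvection.comp_mulLeft_inv
    (hL : (DistribMulAction.toModuleAut K L : Lˣ →* L ≃ₗ[K] L).range ≤ H)
    (h : ContainsDilatransvection H φ u) (hc : c ≠ 0) :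
    ContainsDilatransvection H (φ ∘ₗ LinearMap.mulLeft K c⁻¹) (c * u) :=
  h.conj (hL ⟨Units.mk0 c hc, rfl⟩)

theorem comp_mulLeft_inv_mem_transvectionForms
    (hL : (DistribMulAction.toModuleAut K L : Lˣ →* L ≃ₗ[K] L).range ≤ H)
    (hφ : φ ∈ transvectionForms H v) (hc : c ≠ 0) :
    φ ∘ₗ LinearMap.mulLeft K c⁻¹ ∈ transvectionForms H (c * v) :=
  comp_symm_mem_transvectionForms hφ (hL ⟨Units.mk0 c hc, rfl⟩)

theorem mul_mem_transvectionAxis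
    (hL : (DistribMulAction.toModuleAut K L : Lˣ →* L ≃ₗ[K] L).range ≤ H)
    (hw : w ∈ transvectionAxis H v) (hc : c ≠ 0) : c * w ∈ transvectionAxis H (c * v) := by
  have h : DistribMulAction.toModuleAut K L (Units.mk0 c hc) ∈ H := hL ⟨_, rfl⟩
  have h' := apply_mem_transvectionAxis hw h
  simpa [Units.smul_def] using h'

end Multiplications

section Existence

variable {K L : Type*} [Field K] [Field L] [Algebra K L]
  {H : Subgroup (L ≃ₗ[K] L)} {φ ψ : Dual K L} {u : L}

theorem ContainsDilatransvection.eq_of_apply_eq (hH : ∀ v ≠ 0, transvectionForms H v = ⊥)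
    (hφ : ContainsDilatransvection H φ u) (hψ : ContainsDilatransvection H ψ u)
    (hφψ : φ u = ψ u) (hu : u ≠ 0) : φ = ψ := by
  have hsub : φ - ψ ∈ transvectionForms H u := ⟨by simp [hφψ], hφ.sub hψ hφψ⟩
  rwa [hH u hu, AddSubgroup.mem_bot, sub_eq_zero] at hsub

-- The conjugate of `T = 1 + φ ⊗ 1` by multiplication by `T c` has the same centre and multiplier
-- as the conjugate by multiplication by `c` followed by `T`, so the two coincide.
theorem ContainsDilatransvection.inv_sub_inv_eq
    (hL : (DistribMulAction.toModuleAut K L : Lˣ →* L ≃ₗ[K] L).range ≤ H)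
    (hH : ∀ v ≠ 0, transvectionForms H v = ⊥) (hφ : ContainsDilatransvection H φ 1)
    (hφ0 : φ ≠ 0) {c e : L} (hc : c ≠ 0) (he : e = c + algebraMap K L (φ c)) :
    c⁻¹ - e⁻¹ = algebraMap K L (φ e⁻¹) := by
  obtain ⟨g, hg, hgφ⟩ := id hφ
  have hg_apply (x : L) : g x = x + algebraMap K L (φ x) := by
    rw [Algebra.algebraMap_eq_smul_one]
    exact LinearMap.congr_fun hgφ x
  have hgc : g c = e := (hg_apply c).trans he.symm
  have he0 : e ≠ 0 := hgc ▸ g.map_ne_zero_iff.mpr hc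
  have hconj := (hφ.comp_mulLeft_inv hL hc).conj hg
  rw [mul_one, hgc] at hconj
  have hmul := hφ.comp_mulLeft_inv hL he0
  rw [mul_one] at hmul
  have heq := hconj.eq_of_apply_eq hH hmul (by simp [← hgc, hc]) he0
  have hvanish (x : L) : φ ((c⁻¹ - e⁻¹ - algebraMap K L (φ e⁻¹)) * x) = 0 := by
    have hx : φ (c⁻¹ * x) = φ (e⁻¹ * g x) := by simpa using LinearMap.congr_fun heq (g x)
    rw [hg_apply, mul_add, mul_comm _ (algebraMap K L _), ← Algebra.smul_def, map_add,
      map_smul] at hx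
    rw [sub_mul, sub_mul, ← Algebra.smul_def, map_sub, map_sub, map_smul, hx, smul_eq_mul,
      smul_eq_mul]
    ring
  rw [← sub_eq_zero]
  by_contra hk
  refine hφ0 (LinearMap.ext fun y => ?_)
  rw [← mul_inv_cancel_left₀ hk y]
  exact hvanish _

theorem ContainsDilatransvection.sq_add_smul_mem_range
    (hL : (DistribMulAction.toModuleAut K L : Lˣ →* L ≃ₗ[K] L).range ≤ H)
    (hH : ∀ v ≠ 0, transvectionForms H v = ⊥) (hφ : ContainsDilatransvection H φ 1)
    {c : L} (hc : φ c ≠ 0) : c ^ 2 + φ c • c ∈ (algebraMap K L).range := by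
  have hc0 : c ≠ 0 := by
    rintro rfl
    exact hc φ.map_zero
  obtain ⟨e, he⟩ : ∃ e, e = c + algebraMap K L (φ c) := ⟨_, rfl⟩
  have hinv := hφ.inv_sub_inv_eq hL hH (fun h => hc (by simp [h])) hc0 he
  have he0 : e ≠ 0 := by
    intro h
    simp [h, hc0] at hinv
  have hk : algebraMap K L (φ e⁻¹) * (c * e) = algebraMap K L (φ c) := by
    rw [← hinv, sub_mul, mul_comm c e, inv_mul_cancel_left₀ he0, mul_comm e c,
      inv_mul_cancel_left₀ hc0, he, add_sub_cancel_left]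
  have hk0 : algebraMap K L (φ e⁻¹) ≠ 0 := by
    intro h
    rw [h, zero_mul] at hk
    exact hc ((map_eq_zero _).mp hk.symm)
  refine ⟨φ c / φ e⁻¹, ?_⟩
  rw [map_div₀, div_eq_iff hk0, ← hk, he, Algebra.smul_def]
  ring

-- Comparing the quadratic equations of `γ` and of its translates `γ + s` gives
-- `(φ γ + s φ 1) (φ γ + a + s (2 + φ 1)) = 0` for every `s : K`, where `γ ^ 2 - a γ ∈ K`. The left
-- side is quadratic in `s` and vanishes at the three points `0`, `1` and `-φ 1`.
theorem apply_one_eq_neg_two_of_sq_add_smul_mem_range (hφ0 : φ 1 ≠ 0) (hφ1 : φ 1 ≠ -1)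
    (hφ : ∀ c, φ c ≠ 0 → c ^ 2 + φ c • c ∈ (algebraMap K L).range) {γ : L} {a b : K}
    (hγ : γ ∉ (algebraMap K L).range)
    (hab : γ ^ 2 = algebraMap K L a * γ + algebraMap K L b) : φ 1 = -2 := by
  have hfactor (s : K) : (φ γ + s * φ 1) * (φ γ + a + s * (2 + φ 1)) = 0 := by
    have hφs : φ (γ + algebraMap K L s) = φ γ + s * φ 1 := by
      simp [Algebra.algebraMap_eq_smul_one]
    refine mul_eq_zero.mpr (or_iff_not_imp_left.mpr fun hs => ?_)
    obtain ⟨d, hd⟩ := hφ (γ + algebraMap K L s) (by rwa [hφs])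
    by_contra h
    refine hγ ⟨(d - b - s ^ 2 - (φ γ + s * φ 1) * s) / (φ γ + a + s * (2 + φ 1)), ?_⟩
    rw [map_div₀, div_eq_iff ((_root_.map_ne_zero _).mpr h)]
    rw [hφs, Algebra.smul_def] at hd
    simp only [map_sub, map_add, map_mul, map_pow, map_ofNat] at hd ⊢
    linear_combination hd + hab
  have h : φ 1 * (2 + φ 1) * (φ 1 * (φ 1 + 1)) = 0 := by
    linear_combination hfactor (-φ 1) + φ 1 * hfactor 1 - (φ 1 + 1) * hfactor 0
  have hφ1' : φ 1 + 1 ≠ 0 := by rwa [Ne, add_eq_zero_iff_eq_neg]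
  have h2 : 2 + φ 1 = 0 := by simpa [hφ0, hφ1'] using h
  linear_combination h2

theorem exists_sq_eq_of_sq_add_smul_mem_range (hφ0 : φ 1 ≠ 0)
    (hφ : ∀ c, φ c ≠ 0 → c ^ 2 + φ c • c ∈ (algebraMap K L).range) (γ : L) :
    ∃ a b : K, γ ^ 2 = algebraMap K L a * γ + algebraMap K L b := by
  by_cases hγ : φ γ = 0
  · have hφγ : φ (γ + 1) = φ 1 := by rw [map_add, hγ, zero_add]
    obtain ⟨d, hd⟩ := hφ (γ + 1) (by rwa [hφγ])
    refine ⟨-2 - φ 1, d - 1 - φ 1, ?_⟩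
    rw [hφγ, Algebra.smul_def] at hd
    simp only [map_sub, map_neg, map_one, map_ofNat]
    linear_combination -hd
  · obtain ⟨d, hd⟩ := hφ γ hγ
    refine ⟨-φ γ, d, ?_⟩
    rw [map_neg, hd, Algebra.smul_def]
    ring

theorem finrank_le_two_of_forall_exists_sq_eq [FiniteDimensional K L] [Algebra.IsSeparable K L]
    (h : ∀ γ : L, ∃ a b : K, γ ^ 2 = algebraMap K L a * γ + algebraMap K L b) :
    finrank K L ≤ 2 := by
  obtain ⟨γ, hγ⟩ := Field.exists_primitive_element K L
  obtain ⟨a, b, hab⟩ := h γ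
  have hmonic : (X ^ 2 - (C a * X + C b) : K[X]).Monic := by monicity!
  calc finrank K L = (minpoly K γ).natDegree :=
        ((Field.primitive_element_iff_minpoly_natDegree_eq K γ).mp hγ).symm
    _ ≤ (X ^ 2 - (C a * X + C b) : K[X]).natDegree :=
        natDegree_le_natDegree (minpoly.min K γ hmonic (by simp [hab]))
    _ = 2 := by compute_degree!

theorem exists_transvectionForms_ne_bot [Algebra.IsSeparable K L]
    (hL : (DistribMulAction.toModuleAut K L : Lˣ →* L ≃ₗ[K] L).range ≤ H)
    (hφ : ContainsDilatransvection H φ u) (hφ0 : φ ≠ 0) (hu : u ≠ 0) (hrank : 1 < finrank K L)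
    (hexc : finrank K L = 2 → φ u = -2 → (2 : K) = 0) :
    ∃ v ≠ 0, transvectionForms H v ≠ ⊥ := by
  have : FiniteDimensional K L := FiniteDimensional.of_finrank_pos (one_pos.trans hrank)
  by_contra! hH
  have hφu : φ u ≠ 0 := fun h => hφ0 (by
    simpa [hH u hu] using (show φ ∈ transvectionForms H u from ⟨h, hφ⟩))
  have hφu1 : φ u ≠ -1 := by
    obtain ⟨g, -, hg⟩ := hφ
    intro h
    refine g.map_ne_zero_iff.mpr hu ?_
    rw [← LinearEquiv.coe_coe, hg, LinearMap.transvection.apply, h, neg_one_smul, add_neg_cancel]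
  have hψ := hφ.comp_mulLeft_inv hL (inv_ne_zero hu)
  rw [inv_inv, inv_mul_cancel₀ hu] at hψ
  set ψ : Dual K L := φ ∘ₗ LinearMap.mulLeft K u
  have hψ1 : ψ 1 = φ u := by simp [ψ]
  have hψ_sq (c : L) (hc : ψ c ≠ 0) := hψ.sq_add_smul_mem_range hL hH hc
  have hψ_quad := exists_sq_eq_of_sq_add_smul_mem_range (hψ1 ▸ hφu) hψ_sq
  obtain ⟨γ, hγ⟩ : ∃ γ, γ ∉ (algebraMap K L).range := by
    by_contra! h
    exact hrank.ne' (Algebra.finrank_eq_one_iff_bijective_algebraMap.mpr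
      ⟨(algebraMap K L).injective, h⟩)
  obtain ⟨a, b, hab⟩ := hψ_quad γ
  have hψ_two := apply_one_eq_neg_two_of_sq_add_smul_mem_range (hψ1 ▸ hφu) (hψ1 ▸ hφu1) hψ_sq hγ hab
  have htwo := hexc (le_antisymm (finrank_le_two_of_forall_exists_sq_eq hψ_quad) hrank)
    (hψ1 ▸ hψ_two)
  exact hφu (by rw [← hψ1, hψ_two, htwo, neg_zero])

end Existence

section Hua

variable {F : Type*} [Field F] {A : AddSubgroup F} {a b : F}

-- Hua's identity `a - (a⁻¹ + (b⁻¹ - a)⁻¹)⁻¹ = a * b * a`.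
theorem sq_mul_mem_of_forall_inv_mem (hA : ∀ x ∈ A, x⁻¹ ∈ A) (ha : a ∈ A) (hb : b ∈ A) :
    a ^ 2 * b ∈ A := by
  rcases eq_or_ne a 0 with rfl | ha0
  · simp
  rcases eq_or_ne b 0 with rfl | hb0
  · simp
  rcases eq_or_ne (a * b) 1 with hab | hab
  · simpa [pow_two, mul_assoc, hab] using ha
  have h1 : 1 - a * b ≠ 0 := sub_ne_zero.mpr hab.symm
  have hua : a - (a⁻¹ + (b⁻¹ - a)⁻¹)⁻¹ = a ^ 2 * b := by
    have h : a⁻¹ + (b⁻¹ - a)⁻¹ = (a * (1 - a * b))⁻¹ := by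
      field_simp
      ring
    rw [h, inv_inv]
    ring
  rw [← hua]
  exact A.sub_mem ha (hA _ (A.add_mem (hA a ha) (hA _ (A.sub_mem (hA b hb) ha))))

theorem mul_mem_of_forall_inv_mem [Finite F] (hA : ∀ x ∈ A, x⁻¹ ∈ A) (hA1 : 1 ∈ A)
    (ha : a ∈ A) (hb : b ∈ A) : a * b ∈ A := by
  have hsq {x : F} (hx : x ∈ A) : x ^ 2 ∈ A := by
    simpa using sq_mul_mem_of_forall_inv_mem hA hx hA1
  have hsurj {f : F → F} (hf : Set.MapsTo f A A) (hinj : Set.InjOn f A) : Set.SurjOn f A A :=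
    (((Set.toFinite _).injOn_iff_bijOn_of_mapsTo hf).mp hinj).surjOn
  by_cases h2 : (2 : F) = 0
  · have hinj : Set.InjOn (fun x : F => x ^ 2) A := fun x _ y _ (hxy : x ^ 2 = y ^ 2) => by
      have h : (x - y) ^ 2 = 0 := by linear_combination hxy - (x * y - y ^ 2) * h2
      exact sub_eq_zero.mp (pow_eq_zero_iff two_ne_zero |>.mp h)
    obtain ⟨c, hc, rfl⟩ := hsurj (fun x hx => hsq hx) hinj ha
    exact sq_mul_mem_of_forall_inv_mem hA hc hb
  · obtain ⟨c, hc, rfl⟩ := hsurj (f := fun x => 2 * x)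
      (fun x hx => by simpa [two_mul] using A.add_mem hx hx) (mul_right_injective₀ h2).injOn ha
    have h : (c + b) ^ 2 - c ^ 2 - b ^ 2 ∈ A :=
      A.sub_mem (A.sub_mem (hsq (A.add_mem hc hb)) (hsq hc)) (hsq hb)
    convert h using 1
    ring

end Hua

section Axis

variable {K V : Type*} [Field K] [AddCommGroup V] [Module K V] {H : Subgroup (V ≃ₗ[K] V)} {v w : V}

-- If `φ` is a form at `w` with `φ v ≠ 0`, then commutators of transvections show that `φ v • ψ` is
-- a form at `w` for every form `ψ` at `v`. There are as many forms at `v` as at `w`, so `φ` itself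
-- is `φ v • ψ` for some `ψ`, whence `φ v = φ v * ψ v = 0`.
theorem mem_transvectionAxis_symm [Finite K] [Module.Finite K V] {g : V ≃ₗ[K] V} (hg : g ∈ H)
    (hgw : g w = v) (hw : w ∈ transvectionAxis H v) : v ∈ transvectionAxis H w := by
  rw [mem_transvectionAxis] at hw ⊢
  intro φ hφ
  by_contra hφv
  have hsmul {ψ : Dual K V} (hψ : ψ ∈ transvectionForms H v) : φ v • ψ ∈ transvectionForms H w := by
    obtain ⟨t, ht, htψ⟩ := hψ.2
    have ht_apply (x : V) : t x = x + ψ x • v := LinearMap.congr_fun htψ x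
    have htw : t w = w := by rw [ht_apply, hw ψ hψ, zero_smul, add_zero]
    have hconj : φ ∘ₗ (t : V →ₗ[K] V) ∈ transvectionForms H w := by
      have h := comp_symm_mem_transvectionForms hφ (H.inv_mem ht)
      rwa [show t⁻¹ w = w from t.symm_apply_eq.mpr htw.symm] at h
    convert AddSubgroup.sub_mem _ hconj hφ using 1
    ext x
    simp [ht_apply, mul_comm]
  have : Finite (Dual K V) := Module.finite_of_finite K
  have hmaps : Set.MapsTo (fun ψ : Dual K V => φ v • ψ ∘ₗ (g.symm : V →ₗ[K] V))
      (transvectionForms H w) (transvectionForms H w) := fun ψ hψ =>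
    hsmul (hgw ▸ comp_symm_mem_transvectionForms hψ hg)
  have hinj : Set.InjOn (fun ψ : Dual K V => φ v • ψ ∘ₗ (g.symm : V →ₗ[K] V))
      (transvectionForms H w) := fun ψ _ χ _ h =>
    (LinearMap.cancel_right g.symm.surjective).mp (smul_right_injective _ hφv h)
  obtain ⟨ψ, hψ, hψφ⟩ := (((Set.toFinite _).injOn_iff_bijOn_of_mapsTo hmaps).mp hinj).surjOn hφ
  refine hφv ?_
  have hgv : g.symm v = w := g.symm_apply_eq.mpr hgw.symm
  simpa [hgv, hψ.1] using (LinearMap.congr_fun hψφ v).symm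

end Axis

section FieldAxis

variable {K L : Type*} [Field K] [Field L] [Algebra K L] [Finite L]
  {H : Subgroup (L ≃ₗ[K] L)} {η : Dual K L} {a v w : L}

theorem mem_transvectionAxis_comm
    (hL : (DistribMulAction.toModuleAut K L : Lˣ →* L ≃ₗ[K] L).range ≤ H)
    (hv : v ≠ 0) (hw : w ≠ 0) : w ∈ transvectionAxis H v ↔ v ∈ transvectionAxis H w := by
  have : Finite K := Finite.of_injective _ (algebraMap K L).injective
  have hsymm {x y : L} (hx : x ≠ 0) (hy : y ≠ 0) (h : y ∈ transvectionAxis H x) :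
      x ∈ transvectionAxis H y :=
    mem_transvectionAxis_symm (hL ⟨Units.mk0 _ (div_ne_zero hx hy), rfl⟩)
      (by simp [Units.smul_def, hy]) h
  exact ⟨hsymm hv hw, hsymm hw hv⟩

theorem inv_mem_transvectionAxis_one
    (hL : (DistribMulAction.toModuleAut K L : Lˣ →* L ≃ₗ[K] L).range ≤ H)
    (ha : a ∈ transvectionAxis H 1) : a⁻¹ ∈ transvectionAxis H 1 := by
  rcases eq_or_ne a 0 with rfl | ha0
  · simp
  have h := mul_mem_transvectionAxis hL ((mem_transvectionAxis_comm hL one_ne_zero ha0).mp ha)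
    (inv_ne_zero ha0)
  rwa [mul_one, inv_mul_cancel₀ ha0] at h

theorem mul_mem_transvectionAxis_one
    (hL : (DistribMulAction.toModuleAut K L : Lˣ →* L ≃ₗ[K] L).range ≤ H)
    (hv : v ∈ transvectionAxis H 1) (hw : w ∈ transvectionAxis H 1) :
    v * w ∈ transvectionAxis H 1 :=
  mul_mem_of_forall_inv_mem (A := (transvectionAxis H 1).toAddSubgroup)
    (fun _ hx => inv_mem_transvectionAxis_one hL hx) (self_mem_transvectionAxis 1) hv hw

theorem apply_mul_ne_zero_of_mem_transvectionAxis_one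
    (hL : (DistribMulAction.toModuleAut K L : Lˣ →* L ≃ₗ[K] L).range ≤ H)
    (hη : η ∈ transvectionForms H 1) (ha : a ∈ transvectionAxis H 1) (ha0 : a ≠ 0)
    (hv : η v ≠ 0) : η (v * a) ≠ 0 := by
  intro hva
  obtain ⟨t, ht, htη⟩ := hη.2
  have ht_apply (x : L) : t x = x + η x • 1 := LinearMap.congr_fun htη x
  have hv0 : v ≠ 0 := by
    rintro rfl
    exact hv η.map_zero
  have hva0 := mul_ne_zero hv0 ha0
  have hva_v : v * a ∈ transvectionAxis H v := by
    simpa using mul_mem_transvectionAxis hL ha hv0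
  have hva_tv : v * a ∈ transvectionAxis H (t v) := by
    simpa [ht_apply (v * a), hva] using apply_mem_transvectionAxis hva_v ht
  have hone : 1 ∈ transvectionAxis H (v * a) := by
    have h := Submodule.sub_mem _
      ((mem_transvectionAxis_comm hL (t.map_ne_zero_iff.mpr hv0) hva0).mp hva_tv)
      ((mem_transvectionAxis_comm hL hv0 hva0).mp hva_v)
    rw [ht_apply, add_sub_cancel_left] at h
    exact (Submodule.smul_mem_iff _ hv).mp h
  have hv_mem : v ∈ transvectionAxis H 1 := by
    simpa [ha0] using mul_mem_transvectionAxis_one hL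
      ((mem_transvectionAxis_comm hL hva0 one_ne_zero).mp hone)
      (inv_mem_transvectionAxis_one hL ha)
  exact hv (mem_transvectionAxis.mp hv_mem η hη)

theorem transvectionAxis_one_eq_one
    (hL : (DistribMulAction.toModuleAut K L : Lˣ →* L ≃ₗ[K] L).range ≤ H)
    (hH : transvectionForms H 1 ≠ ⊥) : transvectionAxis H 1 = 1 := by
  have hone_le : 1 ≤ transvectionAxis H 1 := Submodule.one_le.mpr (self_mem_transvectionAxis 1)
  refine le_antisymm (fun a ha => ?_) hone_le
  obtain ⟨η, hη, hη0⟩ := (transvectionForms H 1).bot_or_exists_ne_zero.resolve_left hH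
  obtain ⟨x, hx⟩ := DFunLike.ne_iff.mp hη0
  have hsub : η (x * (a - algebraMap K L (η (x * a) / η x))) = 0 := by
    rw [mul_sub, mul_comm x (algebraMap K L _), ← Algebra.smul_def, map_sub, map_smul,
      smul_eq_mul, div_mul_cancel₀ _ hx, sub_self]
  by_contra haK
  exact apply_mul_ne_zero_of_mem_transvectionAxis_one hL hη
    (Submodule.sub_mem _ ha (hone_le (Submodule.algebraMap_mem _)))
    (fun h => haK (sub_eq_zero.mp h ▸ Submodule.algebraMap_mem _)) hx hsub

theorem eq_top_of_range_toModuleAut_le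
    (hL : (DistribMulAction.toModuleAut K L : Lˣ →* L ≃ₗ[K] L).range ≤ H)
    (hH : LinearEquiv.transvections K L ⊆ H) : H = ⊤ := by
  refine eq_top_of_transvections_subset hH fun d => ?_
  have : Finite K := Finite.of_injective _ (algebraMap K L).injective
  obtain ⟨c, rfl⟩ := FiniteField.unitsMap_norm_surjective K L d
  exact ⟨DistribMulAction.toModuleAut K L c, hL ⟨c, rfl⟩, Units.ext (LinearEquiv.coe_det _)⟩

theorem eq_top_of_finrank_le_one
    (hL : (DistribMulAction.toModuleAut K L : Lˣ →* L ≃ₗ[K] L).range ≤ H)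
    (hrank : finrank K L ≤ 1) : H = ⊤ := by
  refine eq_top_of_range_toModuleAut_le hL ?_
  rintro _ ⟨ψ, u, hψu, rfl⟩
  have h : LinearEquiv.transvection hψu = 1 := LinearEquiv.toLinearMap_injective <| by
    rw [LinearEquiv.transvection.coe_toLinearMap]
    exact LinearMap.transvection.eq_id_of_finrank_le_one hψu hrank
  exact h ▸ H.one_mem

end FieldAxis

section PrimeField

variable {p : ℕ} [Fact p.Prime] {L : Type*} [Field L] [Algebra (ZMod p) L] [Finite L]
  {H : Subgroup (L ≃ₗ[ZMod p] L)}

theorem mem_transvectionForms_one_iff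
    (hL : (DistribMulAction.toModuleAut (ZMod p) L : Lˣ →* L ≃ₗ[ZMod p] L).range ≤ H)
    (hH : transvectionForms H 1 ≠ ⊥) {ψ : Dual (ZMod p) L} :
    ψ ∈ transvectionForms H 1 ↔ ψ 1 = 0 := by
  have hcoann : (AddSubgroup.toZModSubmodule p (transvectionForms H 1)).dualCoannihilator = 1 := by
    rw [← transvectionAxis_one_eq_one hL hH]
    ext w
    rw [mem_transvectionAxis, Submodule.mem_dualCoannihilator]
    rfl
  have hann := Subspace.dualCoannihilator_dualAnnihilator_eq
    (W := AddSubgroup.toZModSubmodule p (transvectionForms H 1))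
  rw [← AddSubgroup.mem_toZModSubmodule p, ← hann, hcoann, Submodule.one_eq_span,
    Submodule.mem_dualAnnihilator]
  exact ⟨fun h => h 1 (Submodule.mem_span_singleton_self 1), fun h w hw => by
    obtain ⟨a, rfl⟩ := Submodule.mem_span_singleton.mp hw
    rw [map_smul, h, smul_zero]⟩

theorem transvections_subset_of_transvectionForms_ne_bot
    (hL : (DistribMulAction.toModuleAut (ZMod p) L : Lˣ →* L ≃ₗ[ZMod p] L).range ≤ H)
    {v : L} (hv : v ≠ 0) (hH : transvectionForms H v ≠ ⊥) :
    LinearEquiv.transvections (ZMod p) L ⊆ H := by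
  obtain ⟨η, hη, hη0⟩ := (transvectionForms H v).bot_or_exists_ne_zero.resolve_left hH
  have hH1 : transvectionForms H 1 ≠ ⊥ := by
    have h := comp_mulLeft_inv_mem_transvectionForms hL hη (inv_ne_zero hv)
    rw [inv_inv, inv_mul_cancel₀ hv] at h
    intro hbot
    rw [hbot, AddSubgroup.mem_bot] at h
    refine hη0 (LinearMap.ext fun x => ?_)
    simpa [hv] using LinearMap.congr_fun h (v⁻¹ * x)
  rintro _ ⟨ψ, u, hψu, rfl⟩
  rcases eq_or_ne u 0 with rfl | hu
  · rw [LinearEquiv.transvection.of_right_eq_zero]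
    exact H.one_mem
  have hψ1 : ψ ∘ₗ LinearMap.mulLeft (ZMod p) u ∈ transvectionForms H 1 :=
    (mem_transvectionForms_one_iff hL hH1).mpr (by simpa using hψu)
  obtain ⟨-, g, hg, hgψ⟩ := comp_mulLeft_inv_mem_transvectionForms hL hψ1 hu
  have h : g = LinearEquiv.transvection hψu := LinearEquiv.toLinearMap_injective <| by
    rw [hgψ, LinearEquiv.transvection.coe_toLinearMap, mul_one]
    ext x
    simp [hu, LinearMap.transvection.apply]
  exact h ▸ hg

theorem ContainsDilatransvection.eq_top {φ : Dual (ZMod p) L} {u : L}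
    (hL : (DistribMulAction.toModuleAut (ZMod p) L : Lˣ →* L ≃ₗ[ZMod p] L).range ≤ H)
    (hφ : ContainsDilatransvection H φ u) (hφ0 : φ ≠ 0) (hu : u ≠ 0)
    (hrank : 1 < finrank (ZMod p) L)
    (hexc : finrank (ZMod p) L = 2 → φ u = -2 → p = 2) : H = ⊤ := by
  obtain ⟨v, hv, hH⟩ := exists_transvectionForms_ne_bot hL hφ hφ0 hu hrank fun h2 hφu =>
    hexc h2 hφu ▸ CharP.cast_eq_zero (ZMod p) p
  exact eq_top_of_range_toModuleAut_le hL
    (transvections_subset_of_transvectionForms_ne_bot hL hv hH)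

end PrimeField

section Basis

variable {ι R M : Type*} [Fintype ι] [DecidableEq ι] [CommRing R] [AddCommGroup M] [Module R M]

/-- The action of invertible matrices on a module with a given finite basis. -/
noncomputable def glEquivOfBasis (b : Basis ι R M) : GL ι R ≃* (M ≃ₗ[R] M) :=
  (Units.mapEquiv (Matrix.toLinAlgEquiv b).toMulEquiv).trans
    (LinearMap.GeneralLinearGroup.generalLinearEquiv R M)

theorem coe_glEquivOfBasis (b : Basis ι R M) (A : GL ι R) :
    (glEquivOfBasis b A : M →ₗ[R] M) = Matrix.toLin b b A :=
  rfl

theorem det_eq_of_glEquivOfBasis_mul_inv_eq_transvection {b : Basis ι R M}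
    {A B : GL ι R} {φ : Dual R M} {v : M}
    (h : (glEquivOfBasis b (A * B⁻¹) : M →ₗ[R] M) = LinearMap.transvection φ v) :
    (A : Matrix ι ι R).det = (1 + φ v) * (B : Matrix ι ι R).det := by
  have : Module.Finite R M := .of_basis b
  have : Module.Free R M := .of_basis b
  rw [← LinearMap.transvection.det, ← h, coe_glEquivOfBasis, LinearMap.det_toLin, ← Matrix.det_mul,
    ← Units.val_mul, inv_mul_cancel_right]

end Basis

section Companion

variable {F : Type} [Field F] {S : Type*} [CommRing S] [Algebra F S] (pb : PowerBasis F S)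

theorem mulLeft_gen_eq_toLin_companionMatrix_add {g : F[X]} (hg : g.Monic)
    (hdeg : g.natDegree = pb.dim) {l : Fin pb.dim} (hl : (l : ℕ) = pb.dim - 1) :
    LinearMap.mulLeft F pb.gen =
      Matrix.toLin pb.basis pb.basis (companionMatrix pb.dim g) +
        (pb.basis.coord l).smulRight (aeval pb.gen g) := by
  refine pb.basis.ext fun j => ?_
  have hj : LinearMap.mulLeft F pb.gen (pb.basis j) = pb.gen ^ ((j : ℕ) + 1) := by
    rw [LinearMap.mulLeft_apply, pb.basis_eq_pow, ← pow_succ']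
  rw [hj, LinearMap.add_apply, Matrix.toLin_self, LinearMap.smulRight_apply,
    Basis.coord_apply, Basis.repr_self]
  rcases eq_or_ne j l with rfl | hjl
  · have hlast : (j : ℕ) + 1 = pb.dim := by have := j.2; omega
    have hlc : g.coeff pb.dim = 1 := hdeg ▸ hg
    rw [hlast, aeval_eq_sum_range, hdeg, Finset.sum_range_succ, hlc, Finset.sum_range]
    simp [companionMatrix, hl, pb.basis_eq_pow]
  · have hne : (j : ℕ) ≠ pb.dim - 1 := hl ▸ Fin.val_injective.ne hjl
    have hlt : (j : ℕ) + 1 < pb.dim := by have := j.2; omega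
    rw [Fintype.sum_eq_single (⟨j + 1, hlt⟩ : Fin pb.dim)]
    · simp [companionMatrix, hne, hjl, pb.basis_eq_pow]
    · intro i hi
      have hij : (i : ℕ) ≠ j + 1 := fun h => hi (Fin.ext h)
      simp [companionMatrix, hne, hij]

theorem toLin_companionMatrix_minpoly [Nontrivial S] :
    Matrix.toLin pb.basis pb.basis (companionMatrix pb.dim (minpoly F pb.gen)) =
      LinearMap.mulLeft F pb.gen := by
  have h := mulLeft_gen_eq_toLin_companionMatrix_add pb (minpoly.monic pb.isIntegral_gen)
    pb.natDegree_minpoly (l := ⟨pb.dim - 1, Nat.sub_lt pb.dim_pos one_pos⟩) rfl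
  rw [h, minpoly.aeval, LinearMap.smulRight_zero, add_zero]

theorem det_companionMatrix_of_eq_two {n : ℕ} (hn : n = 2) (f : F[X]) :
    (companionMatrix n f).det = f.coeff 0 := by
  subst hn
  simp [companionMatrix, Matrix.det_fin_two]

variable {pb} {A B : GL (Fin pb.dim) F}

theorem glEquivOfBasis_companionMatrix_minpoly [Nontrivial S]
    (hA : (A : Matrix _ _ F) = companionMatrix pb.dim (minpoly F pb.gen)) {u : Sˣ}
    (hu : (u : S) = pb.gen) : glEquivOfBasis pb.basis A = DistribMulAction.toModuleAut F S u := by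
  apply LinearEquiv.toLinearMap_injective
  rw [coe_glEquivOfBasis, hA, toLin_companionMatrix_minpoly, ← hu]
  rfl

theorem exists_glEquivOfBasis_companionMatrix_mul_inv_eq_transvection [Nontrivial S]
    (hA : (A : Matrix _ _ F) = companionMatrix pb.dim (minpoly F pb.gen)) {g : F[X]}
    (hg : g.Monic) (hdeg : g.natDegree = pb.dim)
    (hB : (B : Matrix _ _ F) = companionMatrix pb.dim g) : ∃ φ : Dual F S, φ ≠ 0 ∧
      (glEquivOfBasis pb.basis (A * B⁻¹) : S →ₗ[F] S) =
        LinearMap.transvection φ (aeval pb.gen g) := by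
  obtain ⟨l, hl⟩ : ∃ l : Fin pb.dim, (l : ℕ) = pb.dim - 1 :=
    ⟨⟨pb.dim - 1, Nat.sub_lt pb.dim_pos one_pos⟩, rfl⟩
  set T := glEquivOfBasis pb.basis B with hT
  refine ⟨pb.basis.coord l ∘ₗ T.symm, ?_, ?_⟩
  · intro h
    simpa [-PowerBasis.coe_basis] using LinearMap.congr_fun h (T (pb.basis l))
  · ext y
    obtain ⟨x, rfl⟩ := T.surjective y
    have hx : glEquivOfBasis pb.basis A x = T x + pb.basis.coord l x • aeval pb.gen g := by
      rw [← LinearEquiv.coe_coe, coe_glEquivOfBasis, hA, toLin_companionMatrix_minpoly,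
        mulLeft_gen_eq_toLin_companionMatrix_add pb hg hdeg hl, ← hB]
      rfl
    rw [map_mul, map_inv, ← hT, LinearMap.transvection.apply]
    simpa using hx

end Companion

section Generators

theorem closure_companionMatrix_eq_top {p : ℕ} [Fact p.Prime] {L : Type*} [Field L]
    [Algebra (ZMod p) L] [Finite L] {pb : PowerBasis (ZMod p) L} {u : Lˣ} (hu : (u : L) = pb.gen)
    (hgen : ∀ v, v ∈ Subgroup.zpowers u) {g : (ZMod p)[X]} (hg : g.Monic)
    (hdeg : g.natDegree = pb.dim) (hroot : 1 < pb.dim → aeval pb.gen g ≠ 0)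
    (hexc : pb.dim = 2 → g.coeff 0 = -(minpoly (ZMod p) pb.gen).coeff 0 → p = 2)
    {A B : GL (Fin pb.dim) (ZMod p)}
    (hA : (A : Matrix _ _ (ZMod p)) = companionMatrix pb.dim (minpoly (ZMod p) pb.gen))
    (hB : (B : Matrix _ _ (ZMod p)) = companionMatrix pb.dim g) :
    Subgroup.closure {A, B} = ⊤ := by
  set e := glEquivOfBasis pb.basis
  set H := (Subgroup.closure {A, B}).map e.toMonoidHom
  have hA_mem : A ∈ Subgroup.closure {A, B} := Subgroup.mem_closure_of_mem (by simp)
  have hB_mem : B ∈ Subgroup.closure {A, B} := Subgroup.mem_closure_of_mem (by simp)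
  suffices hH_top : H = ⊤ from Subgroup.map_injective e.injective
    (hH_top.trans (Subgroup.map_top_of_surjective _ e.surjective).symm)
  have hL : (DistribMulAction.toModuleAut (ZMod p) L : Lˣ →* L ≃ₗ[ZMod p] L).range ≤ H := by
    rintro _ ⟨v, rfl⟩
    obtain ⟨k, rfl⟩ := hgen v
    rw [map_zpow, ← glEquivOfBasis_companionMatrix_minpoly hA hu]
    exact H.zpow_mem (Subgroup.mem_map_of_mem _ hA_mem) k
  rcases le_or_gt (finrank (ZMod p) L) 1 with hrank | hrank
  · exact eq_top_of_finrank_le_one hL hrank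
  obtain ⟨φ, hφ0, hφ⟩ :=
    exists_glEquivOfBasis_companionMatrix_mul_inv_eq_transvection hA hg hdeg hB
  have hdil : ContainsDilatransvection H φ (aeval pb.gen g) :=
    ⟨_, Subgroup.mem_map_of_mem _ (mul_mem hA_mem (inv_mem hB_mem)), hφ⟩
  refine hdil.eq_top hL hφ0 (hroot (pb.finrank ▸ hrank)) hrank fun hrank2 hφ2 => ?_
  have hdim : pb.dim = 2 := pb.finrank.symm.trans hrank2
  have hdet := det_eq_of_glEquivOfBasis_mul_inv_eq_transvection hφ
  rw [hA, hB, det_companionMatrix_of_eq_two hdim, det_companionMatrix_of_eq_two hdim, hφ2] at hdet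
  exact hexc hdim (by linear_combination hdet)

variable {p n : ℕ} [Fact p.Prime] {f : (ZMod p)[X]}

theorem IsPrimitivePoly.eq_two_of_coeff_zero_eq_one (hf : IsPrimitivePoly f n)
    (hn : Even n) (hf0 : f.coeff 0 = 1) : p = 2 := by
  obtain ⟨hmonic, rfl, hirr, u, hu, hgen⟩ := hf
  have := Fact.mk hirr
  let pb := AdjoinRoot.powerBasis' hmonic
  have := pb.finite
  have := Module.finite_of_finite (ZMod p) (M := AdjoinRoot f)
  have hu1 : Units.map (Algebra.norm (ZMod p)) u = 1 := by
    have h := Algebra.PowerBasis.norm_gen_eq_coeff_zero_minpoly pb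
    rw [AdjoinRoot.powerBasis'_gen, AdjoinRoot.minpoly_root hmonic.ne_zero,
      AdjoinRoot.powerBasis'_dim] at h
    simpa [Units.ext_iff, hu, hmonic.leadingCoeff, hn.neg_one_pow, hf0] using h
  obtain ⟨v, hv⟩ := FiniteField.unitsMap_norm_surjective (ZMod p) (AdjoinRoot f) (-1)
  obtain ⟨k, rfl⟩ := hgen v
  rw [map_zpow, hu1, _root_.one_zpow] at hv
  by_contra hp
  have : Fact (2 < p) := ⟨(Fact.out : p.Prime).two_le.lt_of_ne' hp⟩
  exact ZMod.neg_one_ne_one (congrArg Units.val hv).symm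

theorem IsPrimitivePoly.eq_one_of_isRoot_one (hf : IsPrimitivePoly f n)
    (h : f.IsRoot 1) : n = 1 :=
  hf.2.1.symm.trans
    (natDegree_eq_of_degree_eq_some (degree_eq_one_of_irreducible_of_root hf.2.2.1 h))

theorem stmt_1_general (hf : IsPrimitivePoly f n) {g : (ZMod p)[X]} (hg : g.Monic)
    (hdeg : g.natDegree = n) (hfg : 1 < n → g ≠ f)
    (hexc : n = 2 → g.coeff 0 = -f.coeff 0 → p = 2) {Cf Cg : GL (Fin n) (ZMod p)}
    (hCf : (Cf : Matrix (Fin n) (Fin n) (ZMod p)) = companionMatrix n f)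
    (hCg : (Cg : Matrix (Fin n) (Fin n) (ZMod p)) = companionMatrix n g) :
    Subgroup.closure {Cf, Cg} = ⊤ := by
  obtain ⟨hmonic, rfl, hirr, u, hu, hgen⟩ := hf
  have := Fact.mk hirr
  have := (AdjoinRoot.powerBasis' hmonic).finite
  have := Module.finite_of_finite (ZMod p) (M := AdjoinRoot f)
  have hminpoly : minpoly (ZMod p) (AdjoinRoot.powerBasis' hmonic).gen = f := by
    rw [AdjoinRoot.powerBasis'_gen, AdjoinRoot.minpoly_root hmonic.ne_zero, hmonic.leadingCoeff,
      inv_one, map_one, mul_one]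
  refine closure_companionMatrix_eq_top (pb := AdjoinRoot.powerBasis' hmonic) hu hgen hg hdeg ?_ ?_
    (hminpoly.symm ▸ hCf) hCg
  · intro hdim h0
    rw [AdjoinRoot.powerBasis'_gen, AdjoinRoot.aeval_eq, AdjoinRoot.mk_eq_zero] at h0
    exact hfg hdim (eq_of_monic_of_dvd_of_natDegree_le hmonic hg h0 hdeg.le)
  · rwa [hminpoly]

end Generators

/-- Degos's conjecture: over `F_p` (`p` prime), if `f` is a primitive polynomial
of degree `n` and `g = X^n - 1`, then `C_f` and `C_g` generate `GL_n(F_p)`. -/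
theorem stmt_1 (p n : ℕ) [Fact p.Prime] (hn : 0 < n)
    (f : Polynomial (ZMod p)) (hf : IsPrimitivePoly f n)
    (Cf Cg : GL (Fin n) (ZMod p))
    (hCf : (Cf : Matrix (Fin n) (Fin n) (ZMod p)) = companionMatrix n f)
    (hCg : (Cg : Matrix (Fin n) (Fin n) (ZMod p)) =
      companionMatrix n (X ^ n - 1 : Polynomial (ZMod p))) :
    Subgroup.closure {Cf, Cg} = ⊤ := by
  refine stmt_1_general hf (monic_X_pow_sub_C 1 hn.ne') natDegree_X_pow_sub_C ?_ ?_ hCf hCg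
  · rintro hn1 rfl
    exact hn1.ne' (hf.eq_one_of_isRoot_one (by simp))
  · rintro rfl hf0
    exact hf.eq_two_of_coeff_zero_eq_one even_two (by simpa [coeff_X_pow] using hf0.symm)
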